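/- arXiv:1104.5031 — 5 statements merged into one kernel-verified Lean document; each statement's English description precedes it below -/
import Mathlib

section
/- Let a, b ∈ ℚ with b ≠ 0 and 4a³ + 27b² ≠ 0, let j = −1728·(4a)³/(−16(4a³+27b²)), and let f(x) = x⁴ − 4ax³ + 6a²x² + 4(7a³ + 54b²)x + (17a⁴ + 108ab²). Then f has a rational root if and only if there exists t ∈ ℚ with j = −4t³(t+8). -/
/-- The auxiliary quartic, rewritten around `r = a` in terms of `4a³ + 27b²`. -/
theorem auxiliary_quartic_eq (a b r : ℚ) :
    r ^ 4 - 4 * a * r ^ 3 + 6 * a ^ 2 * r ^ 2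
        + 4 * (7 * a ^ 3 + 54 * b ^ 2) * r + (17 * a ^ 4 + 108 * a * b ^ 2) =
      (r - a) ^ 4 + 4 * (4 * a ^ 3 + 27 * b ^ 2) * (2 * (r - a) + 3 * a) := by
  ring

theorem stmt_4 (a b : ℚ) (hb : b ≠ 0) (hΔ : 4 * a ^ 3 + 27 * b ^ 2 ≠ 0)
    (j : ℚ) (hj : j = -1728 * (4 * a) ^ 3 / (-16 * (4 * a ^ 3 + 27 * b ^ 2))) :
    (∃ r : ℚ, r ^ 4 - 4 * a * r ^ 3 + 6 * a ^ 2 * r ^ 2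
        + 4 * (7 * a ^ 3 + 54 * b ^ 2) * r + (17 * a ^ 4 + 108 * a * b ^ 2) = 0) ↔
      ∃ t : ℚ, j = -4 * t ^ 3 * (t + 8) := by
  simp only [auxiliary_quartic_eq]
  generalize 4 * a ^ 3 + 27 * b ^ 2 = D at *
  have hjD : j * D = 6912 * a ^ 3 := by
    rw [hj]
    field_simp
    ring
  rcases eq_or_ne a 0 with rfl | ha
  · exact ⟨fun _ => ⟨0, by simp [hj]⟩, fun _ => ⟨0, by simp⟩⟩
  constructor
  · rintro ⟨r, hr⟩
    generalize r - a = s at hr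
    have hs : s ≠ 0 := by
      rintro rfl
      simp [hΔ, ha] at hr
    refine ⟨12 * a / s, mul_right_cancel₀ hΔ ?_⟩
    rw [hjD]
    field_simp
    linear_combination 6912 * hr
  · rintro ⟨t, rfl⟩
    have ht : t ≠ 0 := by
      rintro rfl
      simp [ha] at hjD
    refine ⟨a + 12 * a / t, ?_⟩
    rw [add_sub_cancel_left]
    field_simp
    linear_combination -3 * a * hjD
end

section
/- The only subgroup G of GL₂(ℤ/8ℤ) that (i) surjects onto GL₂(ℤ/4ℤ) under the reduction map mod 4, (ii) surjects onto (ℤ/8ℤ)^× under the determinant map, and (iii) has a quotient group isomorphic to C₂ × C₂ × C₂, is GL₂(ℤ/8ℤ) itself. -/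
open Matrix

namespace GLTwoModEight

/-- Reduction modulo 4 from `ZMod 8`. -/
abbrev castFour : ZMod 8 →+* ZMod 4 := ZMod.castHom (show (4 : ℕ) ∣ 8 by norm_num) (ZMod 4)

/-- Reduction modulo 4 on `GL₂(ℤ/8ℤ)`. -/
abbrev red : GL (Fin 2) (ZMod 8) →* GL (Fin 2) (ZMod 4) :=
  GeneralLinearGroup.map (n := Fin 2) castFour

/-- The elementary abelian group of order 8. -/
abbrev ElemEight : Type :=
  Multiplicative (ZMod 2) × Multiplicative (ZMod 2) × Multiplicative (ZMod 2)

lemma elemEight_sq (e : ElemEight) : e ^ 2 = 1 := by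
  revert e; decide

lemma exists_notMem_span_pair (p q : ElemEight) :
    ∃ e : ElemEight, ∀ m n : ℕ, p ^ m * q ^ n ≠ e := by
  obtain ⟨e, -, he⟩ := Finset.exists_mem_notMem_of_card_lt_card
    (s := ({1, p, q, p * q} : Finset ElemEight)) (t := Finset.univ)
    (Finset.card_le_four.trans_lt (by simp [Fintype.card_prod]))
  simp only [Finset.mem_insert, Finset.mem_singleton, not_or] at he
  obtain ⟨h1, hp, hq, hpq⟩ := he
  refine ⟨e, fun m n h => ?_⟩
  rw [pow_eq_pow_mod m (elemEight_sq p), pow_eq_pow_mod n (elemEight_sq q)] at h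
  rcases Nat.mod_two_eq_zero_or_one m with hm | hm <;>
    rcases Nat.mod_two_eq_zero_or_one n with hn | hn <;>
    simp only [hm, hn, pow_zero, pow_one, one_mul, mul_one] at h
  exacts [h1 h.symm, hq h.symm, hp h.symm, hpq h.symm]

section ModFour

/-- The upper unitriangular generator. -/
def upper : GL (Fin 2) (ZMod 4) := ⟨!![1, 1; 0, 1], !![1, -1; 0, 1], by decide, by decide⟩

/-- The lower unitriangular generator. -/
def lower : GL (Fin 2) (ZMod 4) := ⟨!![1, 0; 1, 1], !![1, 0; -1, 1], by decide, by decide⟩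

/-- The diagonal matrix `diag(1, -1)`. -/
def refl : GL (Fin 2) (ZMod 4) := ⟨!![1, 0; 0, -1], !![1, 0; 0, -1], by decide, by decide⟩

/-- The permutation matrix exchanging the two coordinates. -/
def swap : GL (Fin 2) (ZMod 4) := ⟨!![0, 1; 1, 0], !![0, 1; 1, 0], by decide, by decide⟩

/-- The rotation by a right angle. -/
def rot : GL (Fin 2) (ZMod 4) := ⟨!![0, 1; -1, 0], !![0, -1; 1, 0], by decide, by decide⟩

lemma swap_mul_upper : swap * upper = lower * swap := by
  ext i j; revert i j; decide

lemma exists_factorization (M : GL (Fin 2) (ZMod 4)) :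
    ∃ z x y j s : ℕ, M = upper ^ z * lower ^ x * upper ^ y * refl ^ j * (rot ^ 2) ^ s := by
  have key : ∀ a b c d : ZMod 4, (a * d - b * c) ^ 2 = 1 →
      ∃ z : Fin 2, ∃ x y : Fin 4, ∃ j s : Fin 2,
        !![a, b; c, d] = ((upper ^ (z : ℕ) * lower ^ (x : ℕ) * upper ^ (y : ℕ) * refl ^ (j : ℕ) *
          (rot ^ 2) ^ (s : ℕ) : GL (Fin 2) (ZMod 4)) : Matrix (Fin 2) (Fin 2) (ZMod 4)) := by
    decide +kernel
  have units_sq : ∀ u : (ZMod 4)ˣ, u ^ 2 = 1 := by decide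
  have hdet : (M.1 0 0 * M.1 1 1 - M.1 0 1 * M.1 1 0) ^ 2 = 1 := by
    rw [← det_fin_two]
    simpa using congrArg Units.val (units_sq (GeneralLinearGroup.det M))
  obtain ⟨z, x, y, j, s, h⟩ := key _ _ _ _ hdet
  exact ⟨z, x, y, j, s, Units.ext ((eta_fin_two M.1).trans h)⟩

lemma not_surjective_elemEight (F : GL (Fin 2) (ZMod 4) →* ElemEight) :
    ¬ Function.Surjective F := by
  intro hF
  have hlower : F lower = F upper := by
    have h := congrArg F swap_mul_upper
    rw [map_mul, map_mul, mul_comm] at h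
    exact (mul_right_cancel h).symm
  obtain ⟨e, he⟩ := exists_notMem_span_pair (F upper) (F refl)
  obtain ⟨M, rfl⟩ := hF e
  obtain ⟨z, x, y, j, s, rfl⟩ := exists_factorization M
  apply he (z + x + y) j
  simp only [map_mul, map_pow, hlower, elemEight_sq, one_pow, mul_one, pow_add]

end ModFour

lemma exists_eq_add_four_smul {g h : GL (Fin 2) (ZMod 8)} (hgh : red g = red h) :
    ∃ B : Matrix (Fin 2) (Fin 2) (ZMod 8), g.1 = h.1 + (4 : ZMod 8) • B := by
  have key : ∀ a b : ZMod 8, castFour a = castFour b → ∃ t, a = b + 4 * t := by decide +kernel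
  have entry (i j : Fin 2) : ∃ t, g.1 i j = h.1 i j + 4 * t :=
    key _ _ (congrArg (fun M : GL (Fin 2) (ZMod 4) => M.1 i j) hgh)
  choose B hB using entry
  exact ⟨B, Matrix.ext hB⟩

lemma exists_sq_eq_one_add_four_smul {G : Subgroup (GL (Fin 2) (ZMod 8))} (hG : G.map red = ⊤)
    (C : Matrix (Fin 2) (Fin 2) (ZMod 8)) (hC : (4 : ZMod 8) • (C * C) = 0) :
    ∃ g ∈ G, (g ^ 2).1 = 1 + (4 : ZMod 8) • C := by
  have h44 : (4 : ZMod 8) * 4 = 0 := by decide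
  have h24 : (2 : ZMod 8) * 4 = 0 := by decide
  have h42 : (4 : ZMod 8) * 2 = 0 := by decide
  have h22 : (2 : ZMod 8) * 2 = 4 := by decide
  have hsum : (4 : ZMod 8) + 4 = 0 := by decide
  let h : GL (Fin 2) (ZMod 8) := ⟨1 + (2 : ZMod 8) • C, 1 - (2 : ZMod 8) • C,
    by simp only [add_mul, mul_sub, one_mul, mul_one, smul_mul_smul_comm, h22, hC]; abel,
    by simp only [sub_mul, mul_add, one_mul, mul_one, smul_mul_smul_comm, h22, hC]; abel⟩
  obtain ⟨g, hg, hgh⟩ : red h ∈ G.map red := hG ▸ Subgroup.mem_top _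
  obtain ⟨B, hB⟩ := exists_eq_add_four_smul hgh
  refine ⟨g, hg, ?_⟩
  have hB' : g.1 = 1 + (2 : ZMod 8) • C + (4 : ZMod 8) • B := hB
  have hBB : (4 : ZMod 8) • B + (4 : ZMod 8) • B = 0 := by rw [← add_smul, hsum, zero_smul]
  have hCC : (2 : ZMod 8) • C + (2 : ZMod 8) • C = (4 : ZMod 8) • C := by
    rw [← add_smul]; congr 1
  rw [Units.val_pow_eq_pow_val, hB', pow_two]
  simp only [add_mul, mul_add, one_mul, mul_one, smul_mul_smul_comm, h44, h24, h42, h22, hC,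
    zero_smul, add_zero]
  refine Eq.trans ?_ (add_zero _)
  rw [← hCC, ← hBB]
  generalize (2 : ZMod 8) • C = P
  generalize (4 : ZMod 8) • B = Q
  abel

lemma exists_prod_sq_of_det_eq_one {G : Subgroup (GL (Fin 2) (ZMod 8))} (hG : G.map red = ⊤)
    {k : GL (Fin 2) (ZMod 8)} (hk : red k = 1) (hdet : k.1.det = 1) :
    ∃ x ∈ G, ∃ y ∈ G, ∃ z ∈ G, k = x ^ 2 * y ^ 2 * z ^ 2 := by
  have key : ∀ a b c d : ZMod 8, castFour a = 1 → castFour b = 0 → castFour c = 0 →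
      castFour d = 1 → a * d - b * c = 1 →
      ∃ r s t : ZMod 8, !![a, b; c, d] = (1 + (4 : ZMod 8) • !![0, r; 0, 0]) *
        (1 + (4 : ZMod 8) • !![0, 0; s, 0]) * (1 + (4 : ZMod 8) • !![t, t; t, t]) := by
    decide +kernel
  have entry (i j : Fin 2) : castFour (k.1 i j) = (1 : Matrix (Fin 2) (Fin 2) (ZMod 4)) i j :=
    congrArg (fun M : GL (Fin 2) (ZMod 4) => M.1 i j) hk
  rw [det_fin_two] at hdet
  obtain ⟨r, s, t, hrst⟩ := key _ _ _ _ (entry 0 0) (entry 0 1) (entry 1 0) (entry 1 1) hdet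
  obtain ⟨x, hx, hx2⟩ := exists_sq_eq_one_add_four_smul hG !![0, r; 0, 0] (by clear hrst; revert r; decide)
  obtain ⟨y, hy, hy2⟩ := exists_sq_eq_one_add_four_smul hG !![0, 0; s, 0] (by clear hrst; revert s; decide)
  obtain ⟨z, hz, hz2⟩ := exists_sq_eq_one_add_four_smul hG !![t, t; t, t] (by clear hrst; revert t; decide)
  refine ⟨x, hx, y, hy, z, hz, Units.ext ?_⟩
  rw [Units.val_mul, Units.val_mul, hx2, hy2, hz2, ← hrst]
  exact eta_fin_two k.1

lemma mem_of_red_eq_one_of_det_eq_one {G : Subgroup (GL (Fin 2) (ZMod 8))} (hG : G.map red = ⊤)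
    {k : GL (Fin 2) (ZMod 8)} (hk : red k = 1) (hdet : k.1.det = 1) : k ∈ G := by
  obtain ⟨x, hx, y, hy, z, hz, rfl⟩ := exists_prod_sq_of_det_eq_one hG hk hdet
  exact mul_mem (mul_mem (pow_mem hx 2) (pow_mem hy 2)) (pow_mem hz 2)

lemma det_eq_one_or_five {k : GL (Fin 2) (ZMod 8)} (hk : red k = 1) :
    k.1.det = 1 ∨ k.1.det = 5 := by
  have key : ∀ u : ZMod 8, castFour u = 1 → u = 1 ∨ u = 5 := by decide
  apply key
  rw [RingHom.map_det]
  exact (congrArg (fun M : GL (Fin 2) (ZMod 4) => M.1.det) hk).trans det_one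

lemma eq_top_of_exists_det_ne_one {G : Subgroup (GL (Fin 2) (ZMod 8))} (hG : G.map red = ⊤)
    {k : GL (Fin 2) (ZMod 8)} (hkG : k ∈ G) (hk : red k = 1) (hdet : k.1.det ≠ 1) : G = ⊤ := by
  have hk5 := (det_eq_one_or_five hk).resolve_left hdet
  rw [eq_top_iff]
  intro g _
  obtain ⟨h, hh, hgh⟩ : red g ∈ G.map red := hG ▸ Subgroup.mem_top _
  have hred : red (g * h⁻¹) = 1 := by rw [map_mul, map_inv, hgh, mul_inv_cancel]
  suffices g * h⁻¹ ∈ G by simpa using mul_mem this hh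
  rcases det_eq_one_or_five hred with h1 | h5
  · exact mem_of_red_eq_one_of_det_eq_one hG hred h1
  · have hmem : g * h⁻¹ * k ∈ G := by
      apply mem_of_red_eq_one_of_det_eq_one hG
      · rw [map_mul, hred, hk, one_mul]
      · rw [Units.val_mul, det_mul, h5, hk5]
        decide
    exact (mul_mem_cancel_right hkG).mp hmem

lemma exists_det_ne_one_of_surjective {G : Subgroup (GL (Fin 2) (ZMod 8))} (hG : G.map red = ⊤)
    (f : G →* ElemEight) (hf : Function.Surjective f) :
    ∃ k ∈ G, red k = 1 ∧ k.1.det ≠ 1 := by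
  by_contra! hdet
  have hsurj : Function.Surjective (red.comp G.subtype) := by
    rw [← MonoidHom.range_eq_top, MonoidHom.range_comp, Subgroup.range_subtype, hG]
  have hker : (red.comp G.subtype).ker ≤ f.ker := by
    rintro ⟨k, hkG⟩ hk
    obtain ⟨x, hx, y, hy, z, hz, hxyz⟩ := exists_prod_sq_of_det_eq_one hG hk (hdet k hkG hk)
    have hprod : (⟨k, hkG⟩ : G) = ⟨x, hx⟩ ^ 2 * ⟨y, hy⟩ ^ 2 * ⟨z, hz⟩ ^ 2 := Subtype.ext hxyz
    rw [MonoidHom.mem_ker, hprod]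
    simp only [map_mul, map_pow, elemEight_sq, mul_one]
  let F := (red.comp G.subtype).liftOfSurjective hsurj ⟨f, hker⟩
  refine not_surjective_elemEight F fun e => ?_
  obtain ⟨g, rfl⟩ := hf e
  exact ⟨_, (red.comp G.subtype).liftOfRightInverse_comp_apply _ _ ⟨f, hker⟩ g⟩

end GLTwoModEight

open GLTwoModEight

theorem stmt_5 (G : Subgroup (GL (Fin 2) (ZMod 8)))
    (hmod4 : Subgroup.map
      (Matrix.GeneralLinearGroup.map (n := Fin 2)
        (ZMod.castHom (show (4:ℕ) ∣ 8 by norm_num) (ZMod 4))) G = ⊤)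
    (hdet : Subgroup.map (Matrix.GeneralLinearGroup.det) G = ⊤)
    (hquot : ∃ (N : Subgroup G) (_ : N.Normal),
      Nonempty ((G ⧸ N) ≃*
        (Multiplicative (ZMod 2) × Multiplicative (ZMod 2) × Multiplicative (ZMod 2)))) :
    G = ⊤ := by
  obtain ⟨N, _, ⟨e⟩⟩ := hquot
  obtain ⟨k, hkG, hk, hdetk⟩ := exists_det_ne_one_of_surjective hmod4
    (e.toMonoidHom.comp (QuotientGroup.mk' N))
    (e.surjective.comp (QuotientGroup.mk'_surjective N))
  exact eq_top_of_exists_det_ne_one hmod4 hkG hk hdetk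
end

section
/- Let a, b be indeterminates and let f(x) = x⁴ − 4ax³ + 6a²x² + 4(7a³ + 54b²)x + (17a⁴ + 108ab²) ∈ ℤ[a,b][x]. Then the discriminant of f (as a quartic in x) equals 3⁶ · b² · Δ³, where Δ = −16(4a³ + 27b²). In particular, for a, b ∈ ℚ with b ≠ 0 and 4a³ + 27b² ≠ 0, f has no repeated roots. -/
open Polynomial

/-- Twenty-seven times the discriminant of a monic quartic with roots `x, y, z, w`, expressed through
the elementary symmetric functions `s₁, …, s₄` of the roots. -/
theorem quartic_discr_eq_invariants {R : Type*} [CommRing R] {x y z w s₁ s₂ s₃ s₄ : R}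
    (h₁ : x + y + z + w = s₁)
    (h₂ : x * y + x * z + x * w + y * z + y * w + z * w = s₂)
    (h₃ : x * y * z + x * y * w + x * z * w + y * z * w = s₃)
    (h₄ : x * y * z * w = s₄) :
    27 * ((x - y) * (x - z) * (x - w) * (y - z) * (y - w) * (z - w)) ^ 2
      = 4 * (12 * s₄ - 3 * s₁ * s₃ + s₂ ^ 2) ^ 3
        - (72 * s₂ * s₄ + 9 * s₁ * s₂ * s₃ - 27 * s₃ ^ 2 - 27 * s₁ ^ 2 * s₄ - 2 * s₂ ^ 3) ^ 2 := by
  subst h₁ h₂ h₃ h₄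
  ring

/-- Vieta's formulas for a monic quartic. -/
theorem quartic_vieta {R : Type*} [CommRing R] {x y z w s₁ s₂ s₃ s₄ : R}
    (h : X ^ 4 - C s₁ * X ^ 3 + C s₂ * X ^ 2 - C s₃ * X + C s₄
      = (X - C x) * (X - C y) * (X - C z) * (X - C w)) :
    x + y + z + w = s₁ ∧
      x * y + x * z + x * w + y * z + y * w + z * w = s₂ ∧
      x * y * z + x * y * w + x * z * w + y * z * w = s₃ ∧
      x * y * z * w = s₄ := by
  have expand : (X - C x) * (X - C y) * (X - C z) * (X - C w)
      = X ^ 4 - C (x + y + z + w) * X ^ 3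
        + C (x * y + x * z + x * w + y * z + y * w + z * w) * X ^ 2
        - C (x * y * z + x * y * w + x * z * w + y * z * w) * X + C (x * y * z * w) := by
    simp only [map_add, map_mul]
    ring
  rw [expand] at h
  have coeff_eq (n : ℕ) := congrArg (fun p => coeff p n) h
  refine ⟨?_, ?_, ?_, ?_⟩
  · simpa [coeff_X, coeff_C, coeff_X_pow, -map_add, -map_mul, -neg_add_rev, eq_comm] using coeff_eq 3
  · simpa [coeff_X, coeff_C, coeff_X_pow, -map_add, -map_mul, eq_comm] using coeff_eq 2
  · simpa [coeff_X, coeff_C, coeff_X_pow, -map_add, -map_mul, -neg_add_rev, eq_comm] using coeff_eq 1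
  · simpa [coeff_X, coeff_C, coeff_X_pow, -map_add, -map_mul, eq_comm] using coeff_eq 0

theorem stmt_12 (a b : ℚ)
    (f : Polynomial ℚ)
    (hf : f = X ^ 4 - C (4 * a) * X ^ 3 + C (6 * a ^ 2) * X ^ 2
        + C (4 * (7 * a ^ 3 + 54 * b ^ 2)) * X + C (17 * a ^ 4 + 108 * a * b ^ 2))
    (r : Fin 4 → AlgebraicClosure ℚ)
    (hr : f.map (algebraMap ℚ (AlgebraicClosure ℚ)) = ∏ i : Fin 4, (X - C (r i))) :
    (∏ p ∈ Finset.univ.filter (fun p : Fin 4 × Fin 4 => p.1 < p.2), (r p.1 - r p.2) ^ 2)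
        = algebraMap ℚ (AlgebraicClosure ℚ)
            (3 ^ 6 * b ^ 2 * (-16 * (4 * a ^ 3 + 27 * b ^ 2)) ^ 3) ∧
      (b ≠ 0 → 4 * a ^ 3 + 27 * b ^ 2 ≠ 0 → Function.Injective r) := by
  set φ := algebraMap ℚ (AlgebraicClosure ℚ)
  have discr_eq : (∏ p ∈ Finset.univ.filter (fun p : Fin 4 × Fin 4 => p.1 < p.2),
      (r p.1 - r p.2) ^ 2) = φ (3 ^ 6 * b ^ 2 * (-16 * (4 * a ^ 3 + 27 * b ^ 2)) ^ 3) := by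
    have prod_pairs : (∏ p ∈ Finset.univ.filter (fun p : Fin 4 × Fin 4 => p.1 < p.2),
        (r p.1 - r p.2) ^ 2) = ((r 0 - r 1) * (r 0 - r 2) * (r 0 - r 3) * (r 1 - r 2)
          * (r 1 - r 3) * (r 2 - r 3)) ^ 2 := by
      have pairs : Finset.univ.filter (fun p : Fin 4 × Fin 4 => p.1 < p.2)
          = {(0, 1), (0, 2), (0, 3), (1, 2), (1, 3), (2, 3)} := by decide
      rw [pairs]
      simp
      ring
    obtain ⟨h₁, h₂, h₃, h₄⟩ := quartic_vieta (x := r 0) (y := r 1) (z := r 2) (w := r 3)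
      (s₁ := φ (4 * a)) (s₂ := φ (6 * a ^ 2)) (s₃ := φ (-(4 * (7 * a ^ 3 + 54 * b ^ 2))))
      (s₄ := φ (17 * a ^ 4 + 108 * a * b ^ 2)) (by
        rw [Fin.prod_univ_four, hf] at hr
        rw [← hr]
        simp only [Polynomial.map_add, Polynomial.map_sub, Polynomial.map_mul, Polynomial.map_pow,
          map_X, map_C, map_neg]
        ring)
    have invariants := quartic_discr_eq_invariants h₁ h₂ h₃ h₄
    rw [prod_pairs]
    refine mul_left_cancel₀ (show (27 : AlgebraicClosure ℚ) ≠ 0 by norm_num) ?_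
    rw [invariants]
    simp only [map_add, map_mul, map_pow, map_neg, map_ofNat]
    ring
  refine ⟨discr_eq, fun hb hΔ => ?_⟩
  have discr_ne : φ (3 ^ 6 * b ^ 2 * (-16 * (4 * a ^ 3 + 27 * b ^ 2)) ^ 3) ≠ 0 := by
    rw [Ne, map_eq_zero]
    positivity
  rw [← discr_eq, Finset.prod_ne_zero_iff] at discr_ne
  refine Function.Injective.of_lt_imp_ne fun i j hij h => ?_
  exact discr_ne (i, j) (by simpa using hij) (by simp [h])
end

section
/- For every t ∈ ℚ with t ≠ −8, the elliptic curve y² = x³ − ((3t² + 24t)/(t² − 4t + 12))·x − ((2t² + 28t + 96)/(t² − 4t + 12)) is nonsingular (its discriminant is nonzero) and has j-invariant equal to −4t³(t + 8). -/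
theorem stmt_13 (t : ℚ) (ht : t ≠ -8) (a b : ℚ)
    (ha : a = -((3 * t ^ 2 + 24 * t) / (t ^ 2 - 4 * t + 12)))
    (hb : b = -((2 * t ^ 2 + 28 * t + 96) / (t ^ 2 - 4 * t + 12))) :
    -16 * (4 * a ^ 3 + 27 * b ^ 2) ≠ 0 ∧
      -1728 * (4 * a) ^ 3 / (-16 * (4 * a ^ 3 + 27 * b ^ 2)) = -4 * t ^ 3 * (t + 8) := by
  have ht8 : t + 8 ≠ 0 := fun h => ht (eq_neg_of_add_eq_zero_left h)
  obtain ⟨D, hD⟩ : ∃ D, D = t ^ 2 - 4 * t + 12 := ⟨_, rfl⟩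
  have hD0 : D ≠ 0 := by nlinarith [sq_nonneg (t - 2)]
  rw [← hD] at ha hb
  have disc_eq : -16 * (4 * a ^ 3 + 27 * b ^ 2) = -746496 * (t + 8) ^ 2 / D ^ 3 := by
    rw [ha, hb]
    field_simp
    rw [hD]
    ring
  rw [disc_eq]
  refine ⟨by simp [ht8, hD0], ?_⟩
  rw [ha]
  field_simp
  ring
end

section
/- Let u, j ∈ ℚ with j ≠ 0 and u ≠ 1, and set c = −4(j − 1728)/(27j). If u⁴ − 4u³ + 6u² + 4(7 + 54c)u + (17 + 108c) = 0, then j = −27648(2u + 1)/(u − 1)⁴; moreover, setting t = 12/(u − 1), one has j = −4t³(t + 8). -/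
theorem stmt_14 (u j : ℚ) (hj : j ≠ 0) (hu : u ≠ 1)
    (c : ℚ) (hc : c = -4 * (j - 1728) / (27 * j))
    (h : u ^ 4 - 4 * u ^ 3 + 6 * u ^ 2 + 4 * (7 + 54 * c) * u + (17 + 108 * c) = 0) :
    j = -27648 * (2 * u + 1) / (u - 1) ^ 4 ∧
      ∀ t : ℚ, t = 12 / (u - 1) → j = -4 * t ^ 3 * (t + 8) := by
  have hu' : u - 1 ≠ 0 := sub_ne_zero.mpr hu
  have hcj : c * (27 * j) = -4 * (j - 1728) := by
    rw [hc, div_mul_cancel₀ _ (mul_ne_zero (by norm_num) hj)]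
  have hj_eq : j = -27648 * (2 * u + 1) / (u - 1) ^ 4 := by
    rw [eq_div_iff (pow_ne_zero 4 hu')]
    linear_combination j * h - 4 * (2 * u + 1) * hcj
  refine ⟨hj_eq, ?_⟩
  rintro t rfl
  rw [hj_eq]
  field_simp
  ring
end
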